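/- arXiv:math/9801023 — 10 statements merged into one kernel-verified Lean document; each statement's English description precedes it below -/
import Mathlib

section
/- The function f is C^∞ on E (ContDiff ℝ ⊤ f), even though the open balls B(s_k, r_k) carrying the summands f_k accumulate at s_∞. -/
theorem scaled_bound {E : Type*} [NormedAddCommGroup E] [NormedSpace ℝ E]
    (H : E → ℝ) (hH : ContDiff ℝ (⊤ : ℕ∞) H) (a ρ : ℝ) (p : E) (j : ℕ) (C : ℝ)
    (hC : ∀ u, ‖iteratedFDeriv ℝ j H u‖ ≤ C) (x : E) :
    ‖iteratedFDeriv ℝ j (fun x => a * H (ρ • (x - p))) x‖ ≤ |a| * (|ρ| ^ j * C) := by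
  have hHj : ContDiff ℝ j H := hH.of_le (by exact_mod_cast le_top)
  have h1 : ContDiff ℝ j (fun x => H (ρ • x)) := hHj.comp (contDiff_const_smul ρ)
  have h2 : ContDiff ℝ j (fun x => H (ρ • (x - p))) :=
    h1.comp (contDiff_id.sub contDiff_const)
  have e1 : iteratedFDeriv ℝ j (fun x => a * H (ρ • (x - p))) x
      = a • iteratedFDeriv ℝ j (fun x => H (ρ • (x - p))) x := by
    have := iteratedFDeriv_const_smul_apply (a := a) (h2.contDiffAt (x := x))
    simpa [Pi.smul_def] using this
  have e2 : iteratedFDeriv ℝ j (fun x => H (ρ • (x - p))) x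
      = iteratedFDeriv ℝ j (fun x => H (ρ • x)) (x - p) :=
    iteratedFDeriv_comp_sub (f := fun x => H (ρ • x)) j p x
  rw [e1, e2, iteratedFDeriv_comp_const_smul ρ hHj, norm_smul, norm_smul, norm_pow]
  simp only [Real.norm_eq_abs]
  gcongr
  exact hC _

theorem stmt_4 (n : ℕ) (hn : 1 ≤ n)
    (h : EuclideanSpace ℝ (Fin n) → ℝ) (hsmooth : ContDiff ℝ (⊤ : ℕ∞) h)
    (hpos : ∀ x : EuclideanSpace ℝ (Fin n), ‖x‖ < 1 → 0 < h x)
    (hzero : ∀ x : EuclideanSpace ℝ (Fin n), 1 ≤ ‖x‖ → h x = 0)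
    (sinf z : EuclideanSpace ℝ (Fin n)) (hz : z ≠ 0)
    (s : ℕ → EuclideanSpace ℝ (Fin n)) (r : ℕ → ℝ)
    (hs : ∀ k : ℕ, s k = sinf - (3 * (2 : ℝ) ^ (-(k : ℤ))) • z)
    (hr : ∀ k : ℕ, r k = (2 : ℝ) ^ (-(k : ℤ)) * ‖z‖)
    (f : ℕ → EuclideanSpace ℝ (Fin n) → ℝ)
    (hf : ∀ (k : ℕ) (x : EuclideanSpace ℝ (Fin n)),
      f k x = r k * h ((r k)⁻¹ • (x - s k)))
    (Einf : EuclideanSpace ℝ (Fin n) → ℝ)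
    (hEinf : ∀ x : EuclideanSpace ℝ (Fin n), x ≠ sinf →
      Einf x = Real.exp (-1 / ‖x - sinf‖ ^ 2))
    (hEinf0 : Einf sinf = 0)
    (fN : ℕ → EuclideanSpace ℝ (Fin n) → ℝ)
    (hfN : ∀ (N : ℕ) (x : EuclideanSpace ℝ (Fin n)),
      fN N x = Einf x * ∑ k ∈ Finset.range (N + 1), (4 : ℝ) ^ (-(k : ℤ)) * f k x)
    (F : EuclideanSpace ℝ (Fin n) → ℝ)
    (hF : ∀ x : EuclideanSpace ℝ (Fin n),
      F x = Einf x * ∑' k : ℕ, (4 : ℝ) ^ (-(k : ℤ)) * f k x) :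
    ContDiff ℝ (⊤ : ℕ∞) F := by
  set w : EuclideanSpace ℝ (Fin n) := (3 * ‖z‖⁻¹) • z with hw
  have hz0 : 0 < ‖z‖ := norm_pos_iff.2 hz
  have hrpos : ∀ k, 0 < r k := fun k => by rw [hr]; positivity
  have hrle : ∀ k, r k ≤ ‖z‖ := fun k => by
    rw [hr]
    have : (2 : ℝ) ^ (-(k : ℤ)) ≤ 1 := by
      rw [zpow_neg, zpow_natCast]
      exact inv_le_one_of_one_le₀ (one_le_pow₀ (by norm_num))
    nlinarith
  have harg : ∀ k x, (r k)⁻¹ • (x - s k) = (r k)⁻¹ • (x - sinf) + w := fun k x => by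
    have : x - s k = (x - sinf) + (r k) • w := by
      rw [hs, hr, hw, smul_smul]
      have : (2 : ℝ) ^ (-(k : ℤ)) * ‖z‖ * (3 * ‖z‖⁻¹) = 3 * (2 : ℝ) ^ (-(k : ℤ)) := by
        field_simp
      rw [this]; abel
    rw [this, smul_add, smul_smul, inv_mul_cancel₀ (hrpos k).ne', one_smul]
  have hsum4 : Summable (fun k : ℕ => (4 : ℝ) ^ (-(k : ℤ))) := by
    have : (fun k : ℕ => (4 : ℝ) ^ (-(k : ℤ))) = fun k : ℕ => ((4 : ℝ)⁻¹) ^ k := by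
      ext k; rw [zpow_neg, zpow_natCast, inv_pow]
    rw [this]
    exact summable_geometric_of_lt_one (by norm_num) (by norm_num)
  have hcs : HasCompactSupport h := by
    refine HasCompactSupport.intro (isCompact_closedBall (0 : EuclideanSpace ℝ (Fin n)) 1) ?_
    intro x hx
    apply hzero
    simp only [Metric.mem_closedBall, dist_zero_right, not_le] at hx
    exact hx.le
  refine contDiff_infty.2 fun m => ?_
  set H : EuclideanSpace ℝ (Fin n) → ℝ := fun u => (‖u‖ ^ 2) ^ m * h (u + w) with hHdef
  have hH : ContDiff ℝ (⊤ : ℕ∞) H :=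
    ((contDiff_norm_sq ℝ).pow m).mul (hsmooth.comp (contDiff_id.add contDiff_const))
  have hHcs : HasCompactSupport H := by
    apply HasCompactSupport.mul_left
    exact hcs.comp_homeomorph (Homeomorph.addRight w)
  have hbd : ∀ j : ℕ, ∃ C, ∀ u, ‖iteratedFDeriv ℝ j H u‖ ≤ C := fun j =>
    (hHcs.iteratedFDeriv (𝕜 := ℝ) j).exists_bound_of_continuous
      (hH.continuous_iteratedFDeriv (by exact_mod_cast le_top))
  choose C hC using hbd
  have hC0 : ∀ j, 0 ≤ C j := fun j => (norm_nonneg _).trans (hC j 0)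
  have hK : ContDiff ℝ m (fun x => ∑' k : ℕ,
      ((4 : ℝ) ^ (-(k : ℤ)) * r k ^ (2 * m + 1)) * H ((r k)⁻¹ • (x - sinf))) := by
    refine contDiff_tsum (𝕜 := ℝ) (N := (m : ℕ∞))
      (f := fun (k : ℕ) (x : EuclideanSpace ℝ (Fin n)) =>
        ((4 : ℝ) ^ (-(k : ℤ)) * r k ^ (2 * m + 1)) * H ((r k)⁻¹ • (x - sinf)))
      (v := fun j k => (4 : ℝ) ^ (-(k : ℤ)) * (‖z‖ ^ (2 * m + 1 - j) * C j)) ?_ ?_ ?_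
    · intro k
      have hHm : ContDiff ℝ m H := hH.of_le (by exact_mod_cast le_top)
      have h0 : ContDiff ℝ m (fun x : EuclideanSpace ℝ (Fin n) => (r k)⁻¹ • (x - sinf)) := by
        fun_prop
      have h1 : ContDiff ℝ m (fun x => H ((r k)⁻¹ • (x - sinf))) := hHm.comp h0
      exact contDiff_const.mul h1
    · intro j _
      exact hsum4.mul_right _
    · intro j k x hj
      have hj' : j ≤ m := by exact_mod_cast hj
      refine (scaled_bound H hH _ _ sinf j (C j) (hC j) x).trans ?_
      have h4 : 0 < (4 : ℝ) ^ (-(k : ℤ)) := by positivity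
      rw [abs_of_pos (mul_pos h4 (pow_pos (hrpos k) _)), abs_of_pos (inv_pos.2 (hrpos k)),
        mul_assoc, ← mul_assoc (r k ^ _)]
      have : r k ^ (2 * m + 1) * (r k)⁻¹ ^ j = r k ^ (2 * m + 1 - j) := by
        rw [pow_sub₀ _ (hrpos k).ne' (by omega), inv_pow]
      rw [this]
      have := (hrpos k).le
      have := hC0 j
      gcongr
      exact hrle k
  have hE : ContDiff ℝ m (fun x : EuclideanSpace ℝ (Fin n) =>
      ((‖x - sinf‖ ^ 2)⁻¹) ^ m * expNegInvGlue (‖x - sinf‖ ^ 2)) := by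
    have h1 := expNegInvGlue.contDiff_polynomial_eval_inv_mul (n := (m : ℕ∞)) (Polynomial.X ^ m)
    simp only [Polynomial.eval_pow, Polynomial.eval_X] at h1
    exact h1.comp ((contDiff_norm_sq ℝ).comp (contDiff_id.sub contDiff_const))
  have hprod := hE.mul hK
  have heq : F = fun x => (((‖x - sinf‖ ^ 2)⁻¹) ^ m * expNegInvGlue (‖x - sinf‖ ^ 2)) *
      ∑' k : ℕ, ((4 : ℝ) ^ (-(k : ℤ)) * r k ^ (2 * m + 1)) * H ((r k)⁻¹ • (x - sinf)) := by
    funext x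
    rw [hF]
    by_cases hx : x = sinf
    · subst hx
      simp [hEinf0]
    · have hy : 0 < ‖x - sinf‖ := norm_pos_iff.2 (sub_ne_zero.2 hx)
      have hterm : ∀ k : ℕ,
          ((4 : ℝ) ^ (-(k : ℤ)) * r k ^ (2 * m + 1)) * H ((r k)⁻¹ • (x - sinf))
          = (‖x - sinf‖ ^ 2) ^ m * ((4 : ℝ) ^ (-(k : ℤ)) * f k x) := by
        intro k
        have hk := hrpos k
        simp only [hHdef]
        rw [hf, harg, norm_smul, norm_inv, Real.norm_eq_abs, abs_of_pos hk]
        have : r k ^ (2 * m + 1) * (((r k)⁻¹ * ‖x - sinf‖) ^ 2) ^ m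
            = r k * (‖x - sinf‖ ^ 2) ^ m := by
          rw [pow_succ, pow_mul, mul_right_comm, ← mul_pow, ← mul_pow,
            mul_inv_cancel_left₀ hk.ne', mul_comm]
        linear_combination ((4 : ℝ) ^ (-(k : ℤ)) * h ((r k)⁻¹ • (x - sinf) + w)) * this
      simp_rw [hterm]
      rw [tsum_mul_left, hEinf x hx]
      have he : expNegInvGlue (‖x - sinf‖ ^ 2) = Real.exp (-1 / ‖x - sinf‖ ^ 2) := by
        have : ¬ (‖x - sinf‖ ^ 2 ≤ 0) := not_le.2 (by positivity)
        rw [expNegInvGlue, if_neg this]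
        congr 1
        rw [neg_div, one_div]
      rw [he]
      have : ((‖x - sinf‖ ^ 2)⁻¹) ^ m * (‖x - sinf‖ ^ 2) ^ m = 1 := by
        rw [← mul_pow, inv_mul_cancel₀ (by positivity), one_pow]
      linear_combination (-(Real.exp (-1 / ‖x - sinf‖ ^ 2) *
        ∑' k : ℕ, (4 : ℝ) ^ (-(k : ℤ)) * f k x)) * this
  rw [heq]
  exact hprod
end

section
/- All iterated derivatives of f and of each fN vanish at s_∞: for every j ∈ ℕ and every N ∈ ℕ, iteratedFDeriv ℝ j f s_∞ = 0 and iteratedFDeriv ℝ j fN s_∞ = 0. -/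
lemma aux_bound {V : Type*} [NormedAddCommGroup V] [NormedSpace ℝ V]
    [FiniteDimensional ℝ V] (P H : V → ℝ)
    (hP : ContDiff ℝ (⊤ : ℕ∞) P) (hH : ContDiff ℝ (⊤ : ℕ∞) H) (R : ℝ)
    (hsupp : tsupport P ⊆ Metric.closedBall 0 R) (j : ℕ) :
    ∃ C : ℝ, 0 ≤ C ∧ ∀ e : ℝ, 0 ≤ e → e ≤ 1 → ∀ w : V,
      ‖iteratedFDeriv ℝ j (fun w => P w * H (e • w)) w‖ ≤ C := by
  have hK : IsCompact (Metric.closedBall (0 : V) R) := isCompact_closedBall _ _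
  have bd : ∀ (G : V → ℝ), ContDiff ℝ (⊤ : ℕ∞) G → ∀ i : ℕ, ∃ C : ℝ, 0 ≤ C ∧
      ∀ w ∈ Metric.closedBall (0 : V) R, ‖iteratedFDeriv ℝ i G w‖ ≤ C := by
    intro G hG i
    have hc : Continuous (iteratedFDeriv ℝ i G) :=
      hG.continuous_iteratedFDeriv (by exact_mod_cast le_top)
    obtain ⟨C, hC⟩ := hK.exists_bound_of_continuousOn hc.continuousOn
    exact ⟨max C 0, le_max_right _ _, fun w hw => (hC w hw).trans (le_max_left _ _)⟩
  have hHj : ∀ i : ℕ, ContDiff ℝ i H := fun i => hH.of_le (by exact_mod_cast le_top)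
  choose A hA0 hA using bd P hP
  choose B hB0 hB using bd H hH
  refine ⟨∑ i ∈ Finset.range (j + 1), (j.choose i : ℝ) * A i * B (j - i), ?_, ?_⟩
  · exact Finset.sum_nonneg fun i _ => mul_nonneg (mul_nonneg (by positivity) (hA0 i)) (hB0 _)
  intro e he0 he1 w
  have hHe : ContDiff ℝ (⊤ : ℕ∞) (fun w : V => H (e • w)) :=
    hH.comp (contDiff_const_smul e)
  refine (norm_iteratedFDeriv_mul_le hP hHe w (by exact_mod_cast le_top)).trans ?_
  refine Finset.sum_le_sum fun i _ => ?_
  by_cases hw : w ∈ Metric.closedBall (0 : V) R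
  · have h1 := hA i w hw
    have hw' : e • w ∈ Metric.closedBall (0 : V) R := by
      simp only [Metric.mem_closedBall, dist_zero_right, norm_smul, Real.norm_eq_abs,
        abs_of_nonneg he0] at hw ⊢
      exact (mul_le_of_le_one_left (norm_nonneg _) he1).trans hw
    have h2 : ‖iteratedFDeriv ℝ (j - i) (fun w => H (e • w)) w‖ ≤ B (j - i) := by
      rw [iteratedFDeriv_comp_const_smul e (hHj (j - i)), norm_smul]
      have : ‖e ^ (j - i)‖ ≤ 1 := by
        rw [norm_pow, Real.norm_eq_abs, abs_of_nonneg he0]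
        exact pow_le_one₀ he0 he1
      exact (mul_le_of_le_one_left (norm_nonneg _) this).trans (hB _ _ hw')
    have := hA0 i
    gcongr
  · have : iteratedFDeriv ℝ i P w = 0 := by
      by_contra hne
      exact hw (hsupp (support_iteratedFDeriv_subset i hne))
    rw [this, norm_zero, mul_zero, zero_mul]
    exact mul_nonneg (mul_nonneg (by positivity) (hA0 i)) (hB0 _)

lemma aux_scale {V : Type*} [NormedAddCommGroup V] [NormedSpace ℝ V] (G : V → ℝ)
    (hG : ContDiff ℝ (⊤ : ℕ∞) G) (j : ℕ) (C : ℝ)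
    (hC : ∀ w, ‖iteratedFDeriv ℝ j G w‖ ≤ C) (c a : ℝ) (s x : V) :
    ‖iteratedFDeriv ℝ j (fun x => c * G (a • (x - s))) x‖ ≤ |c| * (|a| ^ j * C) := by
  have hGj : ContDiff ℝ j G := hG.of_le (by exact_mod_cast le_top)
  have h1 : ContDiff ℝ j (fun x => G (a • (x - s))) :=
    hGj.comp (contDiff_const.smul (contDiff_id.sub contDiff_const))
  have h2 := iteratedFDeriv_const_smul_apply' (a := c) (h1.contDiffAt (x := x))
  simp only [smul_eq_mul] at h2
  rw [h2, norm_smul, Real.norm_eq_abs]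
  gcongr
  rw [iteratedFDeriv_comp_sub (f := fun y => G (a • y)), iteratedFDeriv_comp_const_smul a hGj, norm_smul, norm_pow,
    Real.norm_eq_abs]
  gcongr
  exact hC _

lemma aux_H {V : Type*} [NormedAddCommGroup V] [InnerProductSpace ℝ V] (m : ℕ) :
    ContDiff ℝ (⊤ : ℕ∞) (fun u : V => ((‖u‖ ^ 2)⁻¹) ^ m * expNegInvGlue (‖u‖ ^ 2)) := by
  have h := (expNegInvGlue.contDiff_polynomial_eval_inv_mul (n := ⊤) (Polynomial.X ^ m)).comp
    (contDiff_norm_sq ℝ (E := V))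
  simpa [Function.comp_def] using h


theorem stmt_5 (n : ℕ) (hn : 1 ≤ n)
    (h : EuclideanSpace ℝ (Fin n) → ℝ) (hsmooth : ContDiff ℝ (⊤ : ℕ∞) h)
    (hpos : ∀ x : EuclideanSpace ℝ (Fin n), ‖x‖ < 1 → 0 < h x)
    (hzero : ∀ x : EuclideanSpace ℝ (Fin n), 1 ≤ ‖x‖ → h x = 0)
    (sinf z : EuclideanSpace ℝ (Fin n)) (hz : z ≠ 0)
    (s : ℕ → EuclideanSpace ℝ (Fin n)) (r : ℕ → ℝ)
    (hs : ∀ k : ℕ, s k = sinf - (3 * (2 : ℝ) ^ (-(k : ℤ))) • z)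
    (hr : ∀ k : ℕ, r k = (2 : ℝ) ^ (-(k : ℤ)) * ‖z‖)
    (f : ℕ → EuclideanSpace ℝ (Fin n) → ℝ)
    (hf : ∀ (k : ℕ) (x : EuclideanSpace ℝ (Fin n)),
      f k x = r k * h ((r k)⁻¹ • (x - s k)))
    (Einf : EuclideanSpace ℝ (Fin n) → ℝ)
    (hEinf : ∀ x : EuclideanSpace ℝ (Fin n), x ≠ sinf →
      Einf x = Real.exp (-1 / ‖x - sinf‖ ^ 2))
    (hEinf0 : Einf sinf = 0)
    (fN : ℕ → EuclideanSpace ℝ (Fin n) → ℝ)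
    (hfN : ∀ (N : ℕ) (x : EuclideanSpace ℝ (Fin n)),
      fN N x = Einf x * ∑ k ∈ Finset.range (N + 1), (4 : ℝ) ^ (-(k : ℤ)) * f k x)
    (F : EuclideanSpace ℝ (Fin n) → ℝ)
    (hF : ∀ x : EuclideanSpace ℝ (Fin n),
      F x = Einf x * ∑' k : ℕ, (4 : ℝ) ^ (-(k : ℤ)) * f k x) :
    ∀ j N : ℕ,
      iteratedFDeriv ℝ j F sinf = 0 ∧ iteratedFDeriv ℝ j (fN N) sinf = 0 := by
  have hz0 : 0 < ‖z‖ := norm_pos_iff.2 hz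
  have he0 : ∀ k : ℕ, 0 < (2 : ℝ) ^ (-(k : ℤ)) := fun k => by positivity
  have he1 : ∀ k : ℕ, (2 : ℝ) ^ (-(k : ℤ)) ≤ 1 := fun k =>
    zpow_le_one_of_nonpos₀ (by norm_num) (by simp)
  have hE : ∀ x, Einf x = expNegInvGlue (‖x - sinf‖ ^ 2) := by
    intro x
    by_cases hx : x = sinf
    · subst hx; simp [hEinf0]
    · have : 0 < ‖x - sinf‖ := norm_pos_iff.2 (sub_ne_zero.2 hx)
      have h2 : ¬ ‖x - sinf‖ ^ 2 ≤ 0 := not_le.2 (by positivity)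
      rw [hEinf x hx, expNegInvGlue, if_neg h2, neg_div, one_div]
  -- each bump vanishes near the limit point
  have hnear : ∀ k : ℕ, ∀ᶠ x in nhds sinf, f k x = 0 := by
    intro k
    have hrk : 0 < r k := by rw [hr]; exact mul_pos (he0 k) hz0
    filter_upwards [Metric.ball_mem_nhds sinf hrk] with x hx
    rw [hf, hzero, mul_zero]
    rw [norm_smul, norm_inv, Real.norm_eq_abs, abs_of_pos hrk, inv_mul_eq_div, le_div_iff₀ hrk,
      one_mul]
    rw [mem_ball_iff_norm] at hx
    have h3 : ‖(3 * (2 : ℝ) ^ (-(k : ℤ))) • z‖ = 3 * r k := by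
      rw [norm_smul, Real.norm_eq_abs, abs_of_pos (by have := he0 k; positivity), hr, mul_assoc]
    have h4 : x - s k = (3 * (2 : ℝ) ^ (-(k : ℤ))) • z - (sinf - x) := by rw [hs]; abel
    have h5 := norm_sub_norm_le ((3 * (2 : ℝ) ^ (-(k : ℤ))) • z) (sinf - x)
    rw [← h4, h3, norm_sub_rev sinf x] at h5
    linarith
  intro j N
  constructor
  swap
  · have : fN N =ᶠ[nhds sinf] fun _ => (0 : ℝ) := by
      have h1 : ∀ᶠ x in nhds sinf, ∀ k ∈ Finset.range (N + 1), f k x = 0 :=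
        (Finset.eventually_all _).2 fun k _ => hnear k
      filter_upwards [h1] with x hx
      rw [hfN, Finset.sum_eq_zero, mul_zero]
      intro k hk
      rw [hx k hk, mul_zero]
    rw [(this.iteratedFDeriv ℝ j).eq_of_nhds]
    simp
  let g : ℕ → EuclideanSpace ℝ (Fin n) → ℝ := fun k x => Einf x * ((4 : ℝ) ^ (-(k : ℤ)) * f k x)
  have hFg : F = fun x => ∑' k, g k x := by
    funext x
    rw [hF]
    exact tsum_mul_left.symm
  let P : ℕ → EuclideanSpace ℝ (Fin n) → ℝ := fun m w =>
    h (‖z‖⁻¹ • (w + (3 : ℝ) • z)) * (‖w‖ ^ 2) ^ m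
  let H : ℕ → EuclideanSpace ℝ (Fin n) → ℝ := fun m u =>
    ((‖u‖ ^ 2)⁻¹) ^ m * expNegInvGlue (‖u‖ ^ 2)
  have hH : ∀ m, ContDiff ℝ (⊤ : ℕ∞) (H m) := fun m => aux_H m
  have hP : ∀ m, ContDiff ℝ (⊤ : ℕ∞) (P m) := fun m =>
    (hsmooth.comp (g := h) (f := fun w => ‖z‖⁻¹ • (w + (3 : ℝ) • z)) (by fun_prop)).mul
      ((contDiff_norm_sq ℝ).pow m)
  have hPs : ∀ m, tsupport (P m) ⊆ Metric.closedBall 0 (4 * ‖z‖) := by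
    intro m
    refine closure_minimal ?_ Metric.isClosed_closedBall
    intro w hw
    by_contra hcon
    apply hw
    have hw4 : 4 * ‖z‖ < ‖w‖ := by simpa using hcon
    have : h (‖z‖⁻¹ • (w + (3 : ℝ) • z)) = 0 := by
      apply hzero
      rw [norm_smul, norm_inv, norm_norm, inv_mul_eq_div, le_div_iff₀ hz0, one_mul]
      have h5 := norm_sub_norm_le w (-((3 : ℝ) • z))
      rw [sub_neg_eq_add, norm_neg, norm_smul] at h5
      norm_num at h5
      linarith
    simp only [P, this, zero_mul]
  have hrep : ∀ m k, g k = fun x => ((4 : ℝ) ^ (-(k : ℤ)) * r k * ((2 : ℝ) ^ (-(k : ℤ))) ^ (2 * m))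
      * (fun w => P m w * H m (((2 : ℝ) ^ (-(k : ℤ))) • w))
        (((2 : ℝ) ^ (-(k : ℤ)))⁻¹ • (x - sinf)) := by
    intro m k
    funext x
    have hek := he0 k
    simp only [g, P, H]
    rw [hE, hf]
    generalize (4 : ℝ) ^ (-(k : ℤ)) = q
    have harg : (r k)⁻¹ • (x - s k) = ‖z‖⁻¹ • (((2 : ℝ) ^ (-(k : ℤ)))⁻¹ • (x - sinf) + (3 : ℝ) • z) := by
      rw [hr, hs, mul_inv, mul_comm, mul_smul]
      congr 1
      rw [sub_sub_eq_add_sub, add_sub_right_comm, smul_add, smul_smul]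
      congr 2
      field_simp
    rw [harg, smul_smul, mul_inv_cancel₀ hek.ne', one_smul, norm_smul, norm_inv, Real.norm_eq_abs,
      abs_of_pos hek]
    generalize h _ = y
    by_cases hx : ‖x - sinf‖ = 0
    · simp [hx]
    · rw [pow_mul, mul_pow, mul_pow, inv_pow, inv_pow, inv_pow]
      field_simp
  have hbd : ∀ m : ℕ, ∃ C : ℝ, ∀ k x, ‖iteratedFDeriv ℝ m (g k) x‖ ≤ C * (1 / 4 : ℝ) ^ k := by
    intro m
    obtain ⟨C, hC0, hC⟩ := aux_bound (P m) (H m) (hP m) (hH m) _ (hPs m) m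
    refine ⟨C * ‖z‖, fun k x => ?_⟩
    have hek := he0 k
    have hek1 := he1 k
    rw [hrep m k]
    refine (aux_scale _ ((hP m).mul ((hH m).comp (contDiff_const_smul _))) m C
      (hC _ hek.le hek1) _ _ _ _).trans ?_
    have h4 : (4 : ℝ) ^ (-(k : ℤ)) = (1 / 4 : ℝ) ^ k := by simp
    rw [h4, hr]
    generalize (2 : ℝ) ^ (-(k : ℤ)) = e at hek hek1
    rw [abs_of_nonneg (by positivity), abs_of_pos (by positivity)]
    have : (1 / 4 : ℝ) ^ k * (e * ‖z‖) * e ^ (2 * m) * (e⁻¹ ^ m * C)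
        = (C * ‖z‖ * (1 / 4 : ℝ) ^ k) * (e * e ^ m) := by
      rw [two_mul, pow_add, inv_pow]
      field_simp
    rw [this]
    exact mul_le_of_le_one_right (by positivity)
      (mul_le_one₀ hek1 (by positivity) (pow_le_one₀ hek.le hek1))
  choose C hC using hbd
  have hg : ∀ k, ContDiff ℝ (⊤ : ℕ∞) (g k) := by
    intro k
    rw [hrep 0 k]
    exact contDiff_const.mul (((hP 0).mul ((hH 0).comp (contDiff_const_smul _))).comp
      (f := fun x => ((2 : ℝ) ^ (-(k : ℤ)))⁻¹ • (x - sinf)) (by fun_prop))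
  rw [hFg, iteratedFDeriv_tsum_apply (N := ⊤) hg (v := fun m k => C m * (1 / 4 : ℝ) ^ k)
    (fun m _ => (summable_geometric_of_lt_one (by norm_num) (by norm_num)).mul_left _)
    (fun m k x _ => hC m k x) le_top]
  have hz : ∀ k, iteratedFDeriv ℝ j (g k) sinf = 0 := by
    intro k
    have : g k =ᶠ[nhds sinf] fun _ => (0 : ℝ) := by
      filter_upwards [hnear k] with x hx
      simp [g, hx]
    rw [(this.iteratedFDeriv ℝ j).eq_of_nhds]
    simp
  simp [hz]
end

section
/- f and each fN are nonnegative, and their carriers are given by: {s ∈ E : f(s) > 0} = ⋃_{k ∈ ℕ} Metric.ball s_k r_k, and for every N ∈ ℕ, {s ∈ E : fN(s) > 0} = ⋃_{k ≤ N} Metric.ball s_k r_k. -/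
theorem stmt_6 (n : ℕ) (hn : 1 ≤ n)
    (h : EuclideanSpace ℝ (Fin n) → ℝ) (hsmooth : ContDiff ℝ (⊤ : ℕ∞) h)
    (hpos : ∀ x : EuclideanSpace ℝ (Fin n), ‖x‖ < 1 → 0 < h x)
    (hzero : ∀ x : EuclideanSpace ℝ (Fin n), 1 ≤ ‖x‖ → h x = 0)
    (sinf z : EuclideanSpace ℝ (Fin n)) (hz : z ≠ 0)
    (s : ℕ → EuclideanSpace ℝ (Fin n)) (r : ℕ → ℝ)
    (hs : ∀ k : ℕ, s k = sinf - (3 * (2 : ℝ) ^ (-(k : ℤ))) • z)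
    (hr : ∀ k : ℕ, r k = (2 : ℝ) ^ (-(k : ℤ)) * ‖z‖)
    (f : ℕ → EuclideanSpace ℝ (Fin n) → ℝ)
    (hf : ∀ (k : ℕ) (x : EuclideanSpace ℝ (Fin n)),
      f k x = r k * h ((r k)⁻¹ • (x - s k)))
    (Einf : EuclideanSpace ℝ (Fin n) → ℝ)
    (hEinf : ∀ x : EuclideanSpace ℝ (Fin n), x ≠ sinf →
      Einf x = Real.exp (-1 / ‖x - sinf‖ ^ 2))
    (hEinf0 : Einf sinf = 0)
    (fN : ℕ → EuclideanSpace ℝ (Fin n) → ℝ)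
    (hfN : ∀ (N : ℕ) (x : EuclideanSpace ℝ (Fin n)),
      fN N x = Einf x * ∑ k ∈ Finset.range (N + 1), (4 : ℝ) ^ (-(k : ℤ)) * f k x)
    (F : EuclideanSpace ℝ (Fin n) → ℝ)
    (hF : ∀ x : EuclideanSpace ℝ (Fin n),
      F x = Einf x * ∑' k : ℕ, (4 : ℝ) ^ (-(k : ℤ)) * f k x) :
    (∀ x : EuclideanSpace ℝ (Fin n), 0 ≤ F x) ∧
    (∀ (N : ℕ) (x : EuclideanSpace ℝ (Fin n)), 0 ≤ fN N x) ∧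
    ({x : EuclideanSpace ℝ (Fin n) | 0 < F x} = ⋃ k : ℕ, Metric.ball (s k) (r k)) ∧
    (∀ N : ℕ, {x : EuclideanSpace ℝ (Fin n) | 0 < fN N x} =
      ⋃ k ≤ N, Metric.ball (s k) (r k)) := by
  have hzn : 0 < ‖z‖ := norm_pos_iff.mpr hz
  have hrpos : ∀ k, 0 < r k := fun k => by rw [hr]; positivity
  have hnn : ∀ x, 0 ≤ h x := fun x => by
    rcases lt_or_ge ‖x‖ 1 with hx | hx
    · exact (hpos x hx).le
    · exact (hzero x hx).ge
  have hnorm : ∀ k x, ‖(r k)⁻¹ • (x - s k)‖ = dist x (s k) / r k := fun k x => by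
    rw [norm_smul, norm_inv, Real.norm_of_nonneg (hrpos k).le, dist_eq_norm]
    ring
  have hfp : ∀ k x, x ∈ Metric.ball (s k) (r k) → 0 < f k x := fun k x hx => by
    rw [hf]
    refine mul_pos (hrpos k) (hpos _ ?_)
    rw [hnorm, div_lt_one (hrpos k)]
    exact hx
  have hfz : ∀ k x, x ∉ Metric.ball (s k) (r k) → f k x = 0 := fun k x hx => by
    rw [hf, hzero, mul_zero]
    rw [hnorm, one_le_div (hrpos k)]
    simpa using hx
  have hfn : ∀ k x, 0 ≤ f k x := fun k x => by
    rw [hf]; exact mul_nonneg (hrpos k).le (hnn _)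
  have htn : ∀ (k : ℕ) x, 0 ≤ (4 : ℝ) ^ (-(k : ℤ)) * f k x := fun k x =>
    mul_nonneg (by positivity) (hfn k x)
  have htp : ∀ (k : ℕ) x, x ∈ Metric.ball (s k) (r k) → 0 < (4 : ℝ) ^ (-(k : ℤ)) * f k x :=
    fun k x hx => mul_pos (by positivity) (hfp k x hx)
  have hEp : ∀ x, x ≠ sinf → 0 < Einf x := fun x hx => by
    rw [hEinf x hx]; exact Real.exp_pos _
  have hEn : ∀ x, 0 ≤ Einf x := fun x => by
    by_cases hx : x = sinf
    · rw [hx, hEinf0]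
    · exact (hEp x hx).le
  have hd : ∀ k, dist sinf (s k) = 3 * r k := fun k => by
    rw [dist_eq_norm, hs, hr, sub_sub_cancel, norm_smul, Real.norm_of_nonneg (by positivity)]
    ring
  have hne : ∀ k x, x ∈ Metric.ball (s k) (r k) → x ≠ sinf := by
    rintro k x hx rfl
    rw [Metric.mem_ball, hd] at hx
    linarith [hrpos k]
  have hsum : ∀ x, x ≠ sinf → Summable (fun k : ℕ => (4 : ℝ) ^ (-(k : ℤ)) * f k x) := by
    intro x hx
    have hx' : 0 < dist x sinf := dist_pos.mpr hx
    obtain ⟨M, hM⟩ := exists_pow_lt_of_lt_one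
      (show 0 < dist x sinf / (4 * ‖z‖) by positivity) (show (1 / 2 : ℝ) < 1 by norm_num)
    apply summable_of_ne_finset_zero (s := Finset.range M)
    intro k hk
    rw [hfz, mul_zero]
    intro hb
    rw [Metric.mem_ball] at hb
    have hMk : M ≤ k := by simpa using hk
    have h1 : (1 / 2 : ℝ) ^ k ≤ (1 / 2) ^ M :=
      pow_le_pow_of_le_one (by norm_num) (by norm_num) hMk
    have h2 : r k = (1 / 2 : ℝ) ^ k * ‖z‖ := by
      rw [hr, zpow_neg, zpow_natCast, one_div, inv_pow]
    have h3 := dist_triangle x (s k) sinf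
    rw [dist_comm (s k) sinf, hd] at h3
    have h4 : (1 / 2 : ℝ) ^ k < dist x sinf / (4 * ‖z‖) := h1.trans_lt hM
    rw [lt_div_iff₀ (by positivity)] at h4
    nlinarith
  refine ⟨fun x => ?_, fun N x => ?_, ?_, fun N => ?_⟩
  · rw [hF]; exact mul_nonneg (hEn x) (tsum_nonneg fun k => htn k x)
  · rw [hfN]; exact mul_nonneg (hEn x) (Finset.sum_nonneg fun k _ => htn k x)
  · ext x
    simp only [Set.mem_ofPred_eq, Set.mem_iUnion]
    constructor
    · intro hp
      by_contra! hc
      rw [hF] at hp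
      simp [fun k => hfz k x (hc k)] at hp
    · rintro ⟨k, hk⟩
      rw [hF]
      exact mul_pos (hEp x (hne k x hk))
        ((hsum x (hne k x hk)).tsum_pos (fun k => htn k x) k (htp k x hk))
  · ext x
    simp only [Set.mem_ofPred_eq, Set.mem_iUnion, exists_prop]
    constructor
    · intro hp
      by_contra! hc
      rw [hfN, Finset.sum_eq_zero, mul_zero] at hp
      · exact lt_irrefl _ hp
      · intro k hk
        rw [hfz k x (hc k (by simpa [Nat.lt_succ_iff] using hk)), mul_zero]
    · rintro ⟨k, hkN, hk⟩
      rw [hfN]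
      exact mul_pos (hEp x (hne k x hk))
        (Finset.sum_pos' (fun k _ => htn k x) ⟨k, by simpa [Nat.lt_succ_iff] using hkN, htp k x hk⟩)
end

section
/- For every N ∈ ℕ and every s ∈ E: if fN(s) ≠ 0 or f(s) = 0, then f(s) = fN(s). (In the paper's words: f = f^N wherever f^N is nonzero or f vanishes.) -/
theorem stmt_7 (n : ℕ) (hn : 1 ≤ n)
    (h : EuclideanSpace ℝ (Fin n) → ℝ) (hsmooth : ContDiff ℝ (⊤ : ℕ∞) h)
    (hpos : ∀ x : EuclideanSpace ℝ (Fin n), ‖x‖ < 1 → 0 < h x)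
    (hzero : ∀ x : EuclideanSpace ℝ (Fin n), 1 ≤ ‖x‖ → h x = 0)
    (sinf z : EuclideanSpace ℝ (Fin n)) (hz : z ≠ 0)
    (s : ℕ → EuclideanSpace ℝ (Fin n)) (r : ℕ → ℝ)
    (hs : ∀ k : ℕ, s k = sinf - (3 * (2 : ℝ) ^ (-(k : ℤ))) • z)
    (hr : ∀ k : ℕ, r k = (2 : ℝ) ^ (-(k : ℤ)) * ‖z‖)
    (f : ℕ → EuclideanSpace ℝ (Fin n) → ℝ)
    (hf : ∀ (k : ℕ) (x : EuclideanSpace ℝ (Fin n)),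
      f k x = r k * h ((r k)⁻¹ • (x - s k)))
    (Einf : EuclideanSpace ℝ (Fin n) → ℝ)
    (hEinf : ∀ x : EuclideanSpace ℝ (Fin n), x ≠ sinf →
      Einf x = Real.exp (-1 / ‖x - sinf‖ ^ 2))
    (hEinf0 : Einf sinf = 0)
    (fN : ℕ → EuclideanSpace ℝ (Fin n) → ℝ)
    (hfN : ∀ (N : ℕ) (x : EuclideanSpace ℝ (Fin n)),
      fN N x = Einf x * ∑ k ∈ Finset.range (N + 1), (4 : ℝ) ^ (-(k : ℤ)) * f k x)
    (F : EuclideanSpace ℝ (Fin n) → ℝ)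
    (hF : ∀ x : EuclideanSpace ℝ (Fin n),
      F x = Einf x * ∑' k : ℕ, (4 : ℝ) ^ (-(k : ℤ)) * f k x) :
    ∀ (N : ℕ) (x : EuclideanSpace ℝ (Fin n)),
      (fN N x ≠ 0 ∨ F x = 0) → F x = fN N x := by
  have hzn : 0 < ‖z‖ := norm_pos_iff.mpr hz
  have h2 : ∀ k : ℕ, (0 : ℝ) < (2 : ℝ) ^ (-(k : ℤ)) := fun k => by positivity
  have hrpos : ∀ k, 0 < r k := fun k => by
    rw [hr]; exact mul_pos (h2 k) hzn
  have hball : ∀ k x, f k x ≠ 0 → ‖x - s k‖ < r k := by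
    intro k x hk
    by_contra hc
    push Not at hc
    apply hk
    rw [hf, hzero, mul_zero]
    rw [norm_smul, norm_inv, Real.norm_of_nonneg (hrpos k).le]
    rw [inv_mul_eq_div, le_div_iff₀ (hrpos k)]
    linarith
  have hlt : ∀ j k x, j < k → f j x ≠ 0 → f k x = 0 := by
    intro j k x hjk hj
    by_contra hk
    have h1 := hball j x hj
    have h3 := hball k x hk
    have hab : 2 * (2 : ℝ) ^ (-(k : ℤ)) ≤ (2 : ℝ) ^ (-(j : ℤ)) := by
      have e : 2 * (2 : ℝ) ^ (-(k : ℤ)) = (2 : ℝ) ^ (1 + -(k : ℤ)) := by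
        rw [zpow_add₀ (by norm_num), zpow_one]
      rw [e]
      exact zpow_le_zpow_right₀ (by norm_num) (by omega)
    have hd : (x - s j) - (x - s k) =
        (3 * ((2 : ℝ) ^ (-(j : ℤ)) - (2 : ℝ) ^ (-(k : ℤ)))) • z := by
      rw [hs, hs]; module
    have h4 := norm_sub_le (x - s j) (x - s k)
    have hk0 := h2 k
    rw [hd, norm_smul, Real.norm_of_nonneg (by linarith)] at h4
    rw [hr] at h1 h3
    nlinarith
  have huniq : ∀ j k x, f j x ≠ 0 → k ≠ j → f k x = 0 := by
    intro j k x hj hkj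
    rcases lt_or_gt_of_ne hkj with hl | hl
    · by_contra hk
      exact hj (hlt k j x hl hk)
    · exact hlt j k x hl hj
  intro N x hx
  by_cases hex : ∃ j, f j x ≠ 0
  · obtain ⟨j, hj⟩ := hex
    by_cases hjN : j ∈ Finset.range (N + 1)
    · rw [hF, hfN, tsum_eq_single j, Finset.sum_eq_single_of_mem j hjN]
      · intro k _ hk
        rw [huniq j k x hj hk, mul_zero]
      · intro k hk
        rw [huniq j k x hj hk, mul_zero]
    · have h0 : fN N x = 0 := by
        rw [hfN, Finset.sum_eq_zero, mul_zero]
        intro k hk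
        rw [huniq j k x hj (fun e => hjN (e ▸ hk)), mul_zero]
      rcases hx with hx | hx
      · exact absurd h0 hx
      · rw [hx, h0]
  · push Not at hex
    rw [hF, hfN]
    simp [hex]
end

section
/- f vanishes to infinite order at every point of its zero set: for every j ∈ ℕ and every s ∈ E with f(s) = 0, iteratedFDeriv ℝ j f s = 0. The same holds for each fN: for every N, j and every s with fN(s) = 0, iteratedFDeriv ℝ j fN s = 0. -/
theorem flat_aux {E : Type*} [NormedAddCommGroup E] [InnerProductSpace ℝ E]
    (G : E → ℝ) (x v : E) (hv : v ≠ 0)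
    (hG : ∀ y : E, 0 ≤ inner ℝ (y - x) v → G y = 0) (j : ℕ) :
    iteratedFDeriv ℝ j G x = 0 := by
  have hS : UniqueDiffOn ℝ {y : E | 0 ≤ inner ℝ (y - x) v} := by
    apply uniqueDiffOn_convex
    · intro a ha b hb s t hs ht hst
      simp only [Set.mem_ofPred_eq] at *
      have : s • a + t • b - x = s • (a - x) + t • (b - x) := by
        have : x = (s + t) • x := by rw [hst, one_smul]
        nth_rewrite 1 [this]
        module
      rw [this, inner_add_left, real_inner_smul_left, real_inner_smul_left]
      positivity
    · refine ⟨x + v, ?_⟩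
      rw [mem_interior]
      refine ⟨{y : E | 0 < inner ℝ (y - x) v}, ?_, ?_, ?_⟩
      · intro y hy
        simp only [Set.mem_ofPred_eq] at hy ⊢
        exact le_of_lt hy
      · exact isOpen_lt continuous_const (by fun_prop)
      · simp only [Set.mem_ofPred_eq, add_sub_cancel_left]
        exact real_inner_self_pos.2 hv
  have key : ∀ j : ℕ, ∀ y ∈ {y : E | 0 ≤ inner ℝ (y - x) v}, iteratedFDeriv ℝ j G y = 0 := by
    intro j
    induction j with
    | zero =>
      intro y hy
      ext m
      simp [hG y hy]
    | succ j ih =>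
      intro y hy
      have h0 : fderiv ℝ (iteratedFDeriv ℝ j G) y = 0 := by
        by_cases hd : DifferentiableAt ℝ (iteratedFDeriv ℝ j G) y
        · rw [← hd.fderivWithin (hS y hy)]
          rw [fderivWithin_congr (f := fun _ => 0) (fun w hw => ih w hw) (ih y hy)]
          simp
        · exact fderiv_zero_of_not_differentiableAt hd
      ext m
      rw [iteratedFDeriv_succ_apply_left, h0]
      simp
  exact key j x (by simp)

theorem flat_fin {n : ℕ}
    (g : ℕ → EuclideanSpace ℝ (Fin n) → ℝ) (N j : ℕ) (x : EuclideanSpace ℝ (Fin n))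
    (hg : ∀ k, ContDiffAt ℝ j (g k) x)
    (h0 : ∀ k ∈ Finset.range N, iteratedFDeriv ℝ j (g k) x = 0) :
    iteratedFDeriv ℝ j (fun y => ∑ k ∈ Finset.range N, g k y) x = 0 := by
  induction N with
  | zero => simp
  | succ N ih =>
    have e : (fun y => ∑ k ∈ Finset.range (N + 1), g k y)
        = (fun y => ∑ k ∈ Finset.range N, g k y) + g N := by
      ext y; simp [Finset.sum_range_succ]
    rw [e, iteratedFDeriv_add_apply (ContDiffAt.sum fun k _ => hg k) (hg N),
      ih (fun k hk => h0 k (by simp at hk ⊢; omega)), h0 N (by simp), add_zero]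

theorem stmt_8 (n : ℕ) (hn : 1 ≤ n)
    (h : EuclideanSpace ℝ (Fin n) → ℝ) (hsmooth : ContDiff ℝ (⊤ : ℕ∞) h)
    (hpos : ∀ x : EuclideanSpace ℝ (Fin n), ‖x‖ < 1 → 0 < h x)
    (hzero : ∀ x : EuclideanSpace ℝ (Fin n), 1 ≤ ‖x‖ → h x = 0)
    (sinf z : EuclideanSpace ℝ (Fin n)) (hz : z ≠ 0)
    (s : ℕ → EuclideanSpace ℝ (Fin n)) (r : ℕ → ℝ)
    (hs : ∀ k : ℕ, s k = sinf - (3 * (2 : ℝ) ^ (-(k : ℤ))) • z)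
    (hr : ∀ k : ℕ, r k = (2 : ℝ) ^ (-(k : ℤ)) * ‖z‖)
    (f : ℕ → EuclideanSpace ℝ (Fin n) → ℝ)
    (hf : ∀ (k : ℕ) (x : EuclideanSpace ℝ (Fin n)),
      f k x = r k * h ((r k)⁻¹ • (x - s k)))
    (Einf : EuclideanSpace ℝ (Fin n) → ℝ)
    (hEinf : ∀ x : EuclideanSpace ℝ (Fin n), x ≠ sinf →
      Einf x = Real.exp (-1 / ‖x - sinf‖ ^ 2))
    (hEinf0 : Einf sinf = 0)
    (fN : ℕ → EuclideanSpace ℝ (Fin n) → ℝ)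
    (hfN : ∀ (N : ℕ) (x : EuclideanSpace ℝ (Fin n)),
      fN N x = Einf x * ∑ k ∈ Finset.range (N + 1), (4 : ℝ) ^ (-(k : ℤ)) * f k x)
    (F : EuclideanSpace ℝ (Fin n) → ℝ)
    (hF : ∀ x : EuclideanSpace ℝ (Fin n),
      F x = Einf x * ∑' k : ℕ, (4 : ℝ) ^ (-(k : ℤ)) * f k x) :
    (∀ (j : ℕ) (x : EuclideanSpace ℝ (Fin n)),
      F x = 0 → iteratedFDeriv ℝ j F x = 0) ∧
    (∀ (N j : ℕ) (x : EuclideanSpace ℝ (Fin n)),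
      fN N x = 0 → iteratedFDeriv ℝ j (fN N) x = 0) := by
  have hzp : 0 < ‖z‖ := norm_pos_iff.2 hz
  have hrpos : ∀ k, 0 < r k := fun k => by rw [hr]; positivity
  have hnn : ∀ y, 0 ≤ h y := fun y => by
    rcases lt_or_ge ‖y‖ 1 with h1 | h1
    · exact (hpos y h1).le
    · exact (hzero y h1).ge
  have hfnn : ∀ k y, 0 ≤ f k y := fun k y => by
    rw [hf]; exact mul_nonneg (hrpos k).le (hnn _)
  have hnorm : ∀ k y, ‖(r k)⁻¹ • (y - s k)‖ = (r k)⁻¹ * ‖y - s k‖ := fun k y => by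
    rw [norm_smul, Real.norm_of_nonneg (inv_nonneg.2 (hrpos k).le)]
  have hf0 : ∀ k y, r k ≤ ‖y - s k‖ → f k y = 0 := fun k y hy => by
    rw [hf, hzero, mul_zero]
    rw [hnorm, inv_mul_eq_div, le_div_iff₀ (hrpos k), one_mul]
    exact hy
  have hf1 : ∀ k y, f k y = 0 → r k ≤ ‖y - s k‖ := fun k y hy => by
    by_contra hlt
    push Not at hlt
    have : 0 < f k y := by
      rw [hf]
      apply mul_pos (hrpos k)
      apply hpos
      rw [hnorm, inv_mul_eq_div, div_lt_one (hrpos k)]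
      exact hlt
    linarith
  -- half space at sinf
  have hhalf : ∀ k y, 0 ≤ inner ℝ (y - sinf) z → f k y = 0 := fun k y hy => by
    apply hf0
    have e : y - s k = (y - sinf) + (3 * (2 : ℝ) ^ (-(k : ℤ))) • z := by
      rw [hs]; module
    have h1 : inner ℝ (y - s k) z ≤ ‖y - s k‖ * ‖z‖ := real_inner_le_norm _ _
    have h2 : inner ℝ (y - s k) z
        = inner ℝ (y - sinf) z + 3 * (2 : ℝ) ^ (-(k : ℤ)) * ‖z‖ ^ 2 := by
      rw [e, inner_add_left, real_inner_smul_left, real_inner_self_eq_norm_sq]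
    have hp : 0 < (2 : ℝ) ^ (-(k : ℤ)) := by positivity
    have h3 : 3 * (2 : ℝ) ^ (-(k : ℤ)) * ‖z‖ * ‖z‖ ≤ ‖y - s k‖ * ‖z‖ := by nlinarith
    have h4 := le_of_mul_le_mul_right h3 hzp
    rw [hr]
    nlinarith [mul_pos hp hzp]
  have hEsm : ∀ (j : ℕ) x, x ≠ sinf → ContDiffAt ℝ j Einf x := fun j x hx => by
    have : Einf =ᶠ[nhds x] fun y => Real.exp (-1 / ‖y - sinf‖ ^ 2) := by
      filter_upwards [isOpen_ne.mem_nhds hx] with y hy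
      exact hEinf y hy
    refine ContDiffAt.congr_of_eventuallyEq ?_ this
    apply ContDiffAt.exp
    apply ContDiffAt.div contDiffAt_const
    · exact (contDiffAt_id.sub contDiffAt_const).norm_sq ℝ
    · have : x - sinf ≠ 0 := sub_ne_zero.2 hx
      positivity
  have hfsm : ∀ (j k : ℕ), ContDiff ℝ j (f k) := fun j k => by
    have : f k = fun x => r k * h ((r k)⁻¹ • (x - s k)) := funext (hf k)
    rw [this]
    have h' : ContDiff ℝ j h := hsmooth.of_le (by exact_mod_cast le_top)
    exact contDiff_const.mul (h'.comp (by fun_prop))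
  have hN : ∀ (N j : ℕ) (x : EuclideanSpace ℝ (Fin n)),
      fN N x = 0 → iteratedFDeriv ℝ j (fN N) x = 0 := by
    intro N j x hx
    by_cases hxs : x = sinf
    · subst hxs
      apply flat_aux _ _ z hz
      intro y hy
      rw [hfN, Finset.sum_eq_zero, mul_zero]
      intro k _
      rw [hhalf k y hy, mul_zero]
    · have e : fN N = fun y => ∑ k ∈ Finset.range (N + 1),
          Einf y * ((4 : ℝ) ^ (-(k : ℤ)) * f k y) := by
        ext y; rw [hfN, Finset.mul_sum]
      have hE : Einf x ≠ 0 := by rw [hEinf x hxs]; positivity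
      have hsum : ∑ k ∈ Finset.range (N + 1), (4 : ℝ) ^ (-(k : ℤ)) * f k x = 0 := by
        rw [hfN] at hx
        exact (mul_eq_zero.1 hx).resolve_left hE
      rw [Finset.sum_eq_zero_iff_of_nonneg
        (fun k _ => mul_nonneg (by positivity) (hfnn k x))] at hsum
      rw [e]
      apply flat_fin
      · intro k
        exact (hEsm j x hxs).mul (contDiffAt_const.mul (hfsm j k).contDiffAt)
      · intro k hk
        have hfx : f k x = 0 := (mul_eq_zero.1 (hsum k hk)).resolve_left (by positivity)
        have hrx := hf1 k x hfx
        have hxp : 0 < ‖x - s k‖ := (hrpos k).trans_le hrx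
        apply flat_aux _ _ (x - s k) (norm_pos_iff.1 hxp)
        intro y hy
        rw [hf0 k y, mul_zero, mul_zero]
        refine hrx.trans ?_
        have h1 : inner ℝ (y - s k) (x - s k) ≤ ‖y - s k‖ * ‖x - s k‖ := real_inner_le_norm _ _
        have h2 : inner ℝ (y - s k) (x - s k)
            = inner ℝ (y - x) (x - s k) + ‖x - s k‖ ^ 2 := by
          rw [← real_inner_self_eq_norm_sq, ← inner_add_left]; congr 1; abel
        exact le_of_mul_le_mul_right (by nlinarith) hxp
  refine ⟨?_, hN⟩
  intro j x hx
  by_cases hxs : x = sinf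
  · subst hxs
    apply flat_aux _ _ z hz
    intro y hy
    rw [hF]
    simp [hhalf _ y hy]
  · have hd : 0 < ‖x - sinf‖ := norm_pos_iff.2 (sub_ne_zero.2 hxs)
    obtain ⟨N, hNN⟩ := exists_pow_lt_of_lt_one
      (show 0 < ‖x - sinf‖ / 2 / (4 * ‖z‖) by positivity) (show (1 / 2 : ℝ) < 1 by norm_num)
    rw [lt_div_iff₀ (by positivity)] at hNN
    have hev : F =ᶠ[nhds x] fN N := by
      have ho : IsOpen {y : EuclideanSpace ℝ (Fin n) | ‖x - sinf‖ / 2 < ‖y - sinf‖} :=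
        isOpen_lt continuous_const (by fun_prop)
      filter_upwards [ho.mem_nhds (show ‖x - sinf‖ / 2 < ‖x - sinf‖ by linarith)] with y hy
      rw [hF, hfN, tsum_eq_sum]
      intro k hk
      rw [hf0 k y, mul_zero]
      have hkN : N ≤ k := by simp at hk; omega
      have h1 : (2 : ℝ) ^ (-(k : ℤ)) ≤ (1 / 2) ^ N := by
        rw [zpow_neg, zpow_natCast, ← inv_pow, ← one_div]
        exact pow_le_pow_of_le_one (by norm_num) (by norm_num) hkN
      have e : y - sinf = (y - s k) - (3 * (2 : ℝ) ^ (-(k : ℤ))) • z := by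
        rw [hs]; module
      have h2 : ‖y - sinf‖ ≤ ‖y - s k‖ + 3 * (2 : ℝ) ^ (-(k : ℤ)) * ‖z‖ := by
        rw [e]
        refine (norm_sub_le _ _).trans ?_
        rw [norm_smul, Real.norm_of_nonneg (by positivity)]
      rw [hr]
      nlinarith [mul_le_mul_of_nonneg_right h1 hzp.le]
    rw [(hev.iteratedFDeriv ℝ j).eq_of_nhds]
    apply hN
    rw [← hev.eq_of_nhds]
    exact hx
end

section
/- fN converges to f in all C^j norms uniformly on E: for every j ∈ ℕ and every ε > 0 there exists N₀ ∈ ℕ such that for all N ≥ N₀ and all s ∈ E, ‖iteratedFDeriv ℝ j (f - fN) s‖ < ε. (This makes precise the paper's assertion that in any neighborhood of the connection defined from f there lies a connection defined from f^N.) -/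
lemma aux_scale_s10 {E : Type*} [NormedAddCommGroup E] [NormedSpace ℝ E] (g : E → ℝ)
    (hg : ContDiff ℝ (⊤ : ℕ∞) g) (r : ℝ) (hr : 0 < r) (c x : E) (i : ℕ) :
    ‖iteratedFDeriv ℝ i (fun x => g (r⁻¹ • (x - c))) x‖
      = (r⁻¹) ^ i * ‖iteratedFDeriv ℝ i g (r⁻¹ • (x - c))‖ := by
  have h1 := iteratedFDeriv_comp_sub (𝕜 := ℝ) (f := fun y => g (r⁻¹ • y)) i c x
  rw [h1]
  have h2 := congrFun (iteratedFDeriv_comp_const_smul (i := i) (r⁻¹)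
    (hg.of_le (by exact_mod_cast le_top))) (x - c)
  rw [h2, norm_smul, Real.norm_of_nonneg (by positivity)]

lemma aux_bound_s10 {E : Type*} [NormedAddCommGroup E] [NormedSpace ℝ E] [ProperSpace E]
    (G H : E → ℝ) (hG : ContDiff ℝ (⊤ : ℕ∞) G) (hH : ContDiff ℝ (⊤ : ℕ∞) H)
    (hH0 : ∀ x, 1 ≤ ‖x‖ → H x = 0) (p : E) (R : ℝ) (J : ℕ) :
    ∃ C : ℝ, ∀ (r : ℝ) (c : E), 0 < r → r ≤ R → ‖c - p‖ ≤ 3 * R → ∀ x,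
      r ^ (2 * J + 1) * ‖iteratedFDeriv ℝ J (fun x => G x * H (r⁻¹ • (x - c))) x‖ ≤ C := by
  have hA : ∀ i : ℕ, ∃ A : ℝ, ∀ x ∈ Metric.closedBall p (4 * R), ‖iteratedFDeriv ℝ i G x‖ ≤ A := by
    intro i
    exact (isCompact_closedBall p (4 * R)).exists_bound_of_continuousOn
      (hG.continuous_iteratedFDeriv (m := i) (by exact_mod_cast le_top)).continuousOn
  have hts : tsupport H ⊆ Metric.closedBall 0 1 := by
    refine closure_minimal ?_ Metric.isClosed_closedBall
    intro x hx
    by_contra hc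
    simp only [Metric.mem_closedBall, dist_zero_right, not_le] at hc
    exact hx (hH0 x hc.le)
  have hHs : HasCompactSupport H :=
    (isCompact_closedBall (0 : E) 1).of_isClosed_subset isClosed_closure hts
  have hB : ∀ i : ℕ, ∃ B : ℝ, ∀ x, ‖iteratedFDeriv ℝ i H x‖ ≤ B := by
    intro i
    exact (hHs.iteratedFDeriv (𝕜 := ℝ) i).exists_bound_of_continuous
      (hH.continuous_iteratedFDeriv (m := i) (by exact_mod_cast le_top))
  choose A hA using hA
  choose B hB using hB
  refine ⟨∑ i ∈ Finset.range (J + 1), (J.choose i : ℝ) * |A i| * |B (J - i)| *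
    (1 + R) ^ (2 * J + 1), ?_⟩
  intro r c hr hrR hc x
  have hHk : ContDiff ℝ (⊤ : ℕ∞) (fun x => H (r⁻¹ • (x - c))) :=
    hH.comp (contDiff_const.smul (contDiff_id.sub contDiff_const))
  have h1 := norm_iteratedFDeriv_mul_le hG hHk x (n := J) (by exact_mod_cast le_top)
  refine (mul_le_mul_of_nonneg_left h1 (by positivity)).trans ?_
  rw [Finset.mul_sum]
  refine Finset.sum_le_sum fun i hi => ?_
  have hiJ : i ≤ J := by simpa [Nat.lt_succ_iff] using hi
  rw [aux_scale_s10 H hH r hr c x]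
  have hR : 0 < R := hr.trans_le hrR
  by_cases hx : ‖r⁻¹ • (x - c)‖ ≤ 1
  · have hxc : ‖x - c‖ ≤ r := by
      rw [norm_smul, Real.norm_of_nonneg (by positivity), inv_mul_le_iff₀ hr] at hx
      simpa using hx
    have hxp : x ∈ Metric.closedBall p (4 * R) := by
      rw [Metric.mem_closedBall, dist_eq_norm]
      have : x - p = (x - c) + (c - p) := by abel
      rw [this]
      refine (norm_add_le _ _).trans ?_
      linarith
    have e1 : ‖iteratedFDeriv ℝ i G x‖ ≤ |A i| := (hA i x hxp).trans (le_abs_self _)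
    have e2 : ‖iteratedFDeriv ℝ (J - i) H (r⁻¹ • (x - c))‖ ≤ |B (J - i)| :=
      (hB _ _).trans (le_abs_self _)
    have e3 : r ^ (2 * J + 1) * r⁻¹ ^ (J - i) ≤ (1 + R) ^ (2 * J + 1) := by
      have : r ^ (2 * J + 1) * r⁻¹ ^ (J - i) = r ^ (J + 1 + i) := by
        have h2 : 2 * J + 1 = (J + 1 + i) + (J - i) := by omega
        rw [h2, pow_add, mul_assoc, ← mul_pow, mul_inv_cancel₀ hr.ne', one_pow, mul_one]
      rw [this]
      calc r ^ (J + 1 + i) ≤ (1 + R) ^ (J + 1 + i) := by gcongr; linarith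
        _ ≤ (1 + R) ^ (2 * J + 1) := pow_le_pow_right₀ (by linarith) (by omega)
    calc _ = (J.choose i : ℝ) * ‖iteratedFDeriv ℝ i G x‖ *
          ‖iteratedFDeriv ℝ (J - i) H (r⁻¹ • (x - c))‖ *
          (r ^ (2 * J + 1) * r⁻¹ ^ (J - i)) := by ring
      _ ≤ _ := by gcongr
  · have : iteratedFDeriv ℝ (J - i) H (r⁻¹ • (x - c)) = 0 := by
      by_contra hne
      exact hx (by simpa using hts (support_iteratedFDeriv_subset (𝕜 := ℝ) (J - i) hne))
    rw [this]
    simp only [norm_zero, mul_zero]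
    positivity

lemma aux_series {E : Type*} [NormedAddCommGroup E] [NormedSpace ℝ E] (g : ℕ → E → ℝ)
    (hg : ∀ k, ContDiff ℝ (⊤ : ℕ∞) (g k))
    (hb : ∀ J : ℕ, ∃ C : ℝ, ∀ k x, ‖iteratedFDeriv ℝ J (g k) x‖ ≤ C * (1 / 4 : ℝ) ^ k)
    (j : ℕ) (ε : ℝ) (hε : 0 < ε) : ∃ N₀ : ℕ, ∀ N ≥ N₀, ∀ x,
      ‖iteratedFDeriv ℝ j
        (fun x => ∑' k, g k x - ∑ k ∈ Finset.range (N + 1), g k x) x‖ < ε := by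
  choose C hC using hb
  have hsum : ∀ J, Summable fun k : ℕ => C J * (1 / 4 : ℝ) ^ k := fun J =>
    (summable_geometric_of_lt_one (by norm_num) (by norm_num)).mul_left _
  have ht := tendsto_sum_nat_add (fun k : ℕ => C j * (1 / 4 : ℝ) ^ k)
  obtain ⟨N₀, hN₀⟩ := (Filter.eventually_atTop.1 (ht.eventually_lt_const hε))
  refine ⟨N₀, fun N hN x => ?_⟩
  have hpt : ∀ x, Summable fun k => g k x := fun x =>
    Summable.of_norm_bounded (hsum 0) (fun k => by
      have h6 := hC 0 k x
      rwa [norm_iteratedFDeriv_zero] at h6)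
  have e : (fun x => ∑' k, g k x - ∑ k ∈ Finset.range (N + 1), g k x)
      = fun x => ∑' k, g (k + (N + 1)) x := by
    funext x
    have h5 := (hpt x).sum_add_tsum_nat_add (N + 1)
    rw [← h5, add_sub_cancel_left]
  rw [e]
  have hsum' : ∀ J, Summable fun k : ℕ => C J * (1 / 4 : ℝ) ^ (k + (N + 1)) := fun J =>
    (summable_nat_add_iff (f := fun k : ℕ => C J * (1 / 4 : ℝ) ^ k) (N + 1)).2 (hsum J)
  have hD := iteratedFDeriv_tsum (𝕜 := ℝ) (N := (⊤ : ℕ∞)) (k := j) (f := fun k => g (k + (N + 1)))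
    (v := fun J k => C J * (1 / 4 : ℝ) ^ (k + (N + 1))) (fun i => hg _)
    (fun J _ => hsum' J) (fun J i x _ => hC J _ x) le_top
  rw [hD]
  exact (tsum_of_norm_bounded (hsum' j).hasSum (fun k => hC j _ x)).trans_lt
    (hN₀ (N + 1) (by omega))

lemma aux_glue (m : ℕ) (t : ℝ) :
    expNegInvGlue t = t ^ m * ((Polynomial.X ^ m : Polynomial ℝ).eval t⁻¹ * expNegInvGlue t) := by
  rcases eq_or_ne t 0 with rfl | ht
  · simp
  · simp only [Polynomial.eval_pow, Polynomial.eval_X]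
    rw [← mul_assoc, ← mul_pow, mul_inv_cancel₀ ht, one_pow, one_mul]

theorem stmt_10 (n : ℕ) (hn : 1 ≤ n)
    (h : EuclideanSpace ℝ (Fin n) → ℝ) (hsmooth : ContDiff ℝ (⊤ : ℕ∞) h)
    (hpos : ∀ x : EuclideanSpace ℝ (Fin n), ‖x‖ < 1 → 0 < h x)
    (hzero : ∀ x : EuclideanSpace ℝ (Fin n), 1 ≤ ‖x‖ → h x = 0)
    (sinf z : EuclideanSpace ℝ (Fin n)) (hz : z ≠ 0)
    (s : ℕ → EuclideanSpace ℝ (Fin n)) (r : ℕ → ℝ)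
    (hs : ∀ k : ℕ, s k = sinf - (3 * (2 : ℝ) ^ (-(k : ℤ))) • z)
    (hr : ∀ k : ℕ, r k = (2 : ℝ) ^ (-(k : ℤ)) * ‖z‖)
    (f : ℕ → EuclideanSpace ℝ (Fin n) → ℝ)
    (hf : ∀ (k : ℕ) (x : EuclideanSpace ℝ (Fin n)),
      f k x = r k * h ((r k)⁻¹ • (x - s k)))
    (Einf : EuclideanSpace ℝ (Fin n) → ℝ)
    (hEinf : ∀ x : EuclideanSpace ℝ (Fin n), x ≠ sinf →
      Einf x = Real.exp (-1 / ‖x - sinf‖ ^ 2))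
    (hEinf0 : Einf sinf = 0)
    (fN : ℕ → EuclideanSpace ℝ (Fin n) → ℝ)
    (hfN : ∀ (N : ℕ) (x : EuclideanSpace ℝ (Fin n)),
      fN N x = Einf x * ∑ k ∈ Finset.range (N + 1), (4 : ℝ) ^ (-(k : ℤ)) * f k x)
    (F : EuclideanSpace ℝ (Fin n) → ℝ)
    (hF : ∀ x : EuclideanSpace ℝ (Fin n),
      F x = Einf x * ∑' k : ℕ, (4 : ℝ) ^ (-(k : ℤ)) * f k x) :
    ∀ (j : ℕ) (ε : ℝ), 0 < ε → ∃ N₀ : ℕ, ∀ N ≥ N₀,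
      ∀ x : EuclideanSpace ℝ (Fin n), ‖iteratedFDeriv ℝ j (F - fN N) x‖ < ε := by
  intro j ε hε
  have hzn : 0 < ‖z‖ := norm_pos_iff.2 hz
  have hrpos : ∀ k, 0 < r k := fun k => by rw [hr]; positivity
  have h2le : ∀ k : ℕ, (2 : ℝ) ^ (-(k : ℤ)) ≤ 1 := fun k => by
    rw [zpow_neg, zpow_natCast]
    exact inv_le_one_of_one_le₀ (one_le_pow₀ (by norm_num))
  have hrle : ∀ k, r k ≤ ‖z‖ := fun k => by
    rw [hr]; exact mul_le_of_le_one_left hzn.le (h2le k)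
  have hsc : ∀ k, ‖s k - sinf‖ ≤ 3 * ‖z‖ := fun k => by
    have : s k - sinf = -((3 * (2 : ℝ) ^ (-(k : ℤ))) • z) := by rw [hs]; abel
    rw [this, norm_neg, norm_smul, Real.norm_of_nonneg (by positivity)]
    have := h2le k
    gcongr
    linarith
  have h4 : ∀ k : ℕ, (4 : ℝ) ^ (-(k : ℤ)) = (1 / 4 : ℝ) ^ k := fun k => by
    rw [zpow_neg, zpow_natCast, one_div, inv_pow]
  have hE : ∀ x, Einf x = expNegInvGlue (‖x - sinf‖ ^ 2) := by
    intro x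
    rcases eq_or_ne x sinf with rfl | hx
    · simp [hEinf0]
    · have : 0 < ‖x - sinf‖ ^ 2 := by
        have := norm_pos_iff.2 (sub_ne_zero.2 hx)
        positivity
      rw [hEinf x hx, expNegInvGlue, if_neg (not_le.2 this)]
      congr 1
      rw [neg_div, one_div]
  set w : EuclideanSpace ℝ (Fin n) := (3 * ‖z‖⁻¹) • z with hw
  have hxw : ∀ k x, x - sinf = r k • ((r k)⁻¹ • (x - s k) - w) := by
    intro k x
    rw [smul_sub, smul_smul, mul_inv_cancel₀ (hrpos k).ne', one_smul, hw, smul_smul, hs, hr]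
    have : (2 : ℝ) ^ (-(k : ℤ)) * ‖z‖ * (3 * ‖z‖⁻¹) = 3 * (2 : ℝ) ^ (-(k : ℤ)) := by
      field_simp
    rw [this]
    abel
  let G : ℕ → EuclideanSpace ℝ (Fin n) → ℝ := fun m x =>
    (Polynomial.X ^ m : Polynomial ℝ).eval (‖x - sinf‖ ^ 2)⁻¹ * expNegInvGlue (‖x - sinf‖ ^ 2)
  let H : ℕ → EuclideanSpace ℝ (Fin n) → ℝ := fun m y => (‖y - w‖ ^ 2) ^ m * h y
  have hGs : ∀ m, ContDiff ℝ (⊤ : ℕ∞) (G m) := fun m =>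
    (expNegInvGlue.contDiff_polynomial_eval_inv_mul (n := ⊤) (Polynomial.X ^ m)).comp
      ((contDiff_id.sub contDiff_const).norm_sq ℝ)
  have hHs : ∀ m, ContDiff ℝ (⊤ : ℕ∞) (H m) := fun m =>
    (((contDiff_id.sub contDiff_const).norm_sq ℝ).pow m).mul hsmooth
  have hH0 : ∀ m x, 1 ≤ ‖x‖ → H m x = 0 := fun m x hx => by simp [H, hzero x hx]
  let g : ℕ → EuclideanSpace ℝ (Fin n) → ℝ := fun k x =>
    Einf x * ((4 : ℝ) ^ (-(k : ℤ)) * f k x)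
  have hg : ∀ m k, g k = fun x =>
      ((1 / 4 : ℝ) ^ k * r k ^ (2 * m + 1)) • (G m x * H m ((r k)⁻¹ • (x - s k))) := by
    intro m k
    funext x
    have e : (‖x - sinf‖ ^ 2) ^ m = r k ^ (2 * m) * (‖(r k)⁻¹ • (x - s k) - w‖ ^ 2) ^ m := by
      rw [hxw k x, norm_smul, Real.norm_of_nonneg (hrpos k).le, mul_pow, mul_pow, ← pow_mul]
    simp only [g, G, H, smul_eq_mul]
    rw [hE x, h4, hf]
    have e' := aux_glue m (‖x - sinf‖ ^ 2)
    rw [e] at e'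
    linear_combination ((1 / 4 : ℝ) ^ k * (r k * h ((r k)⁻¹ • (x - s k)))) * e'
  have hprod : ∀ m k, ContDiff ℝ (⊤ : ℕ∞)
      (fun x => G m x * H m ((r k)⁻¹ • (x - s k))) := fun m k =>
    (hGs m).mul ((hHs m).comp ((contDiff_id.sub contDiff_const).const_smul _))
  have key := aux_series g
    (fun k => by rw [hg 0 k]; exact (hprod 0 k).const_smul _)
    (fun J => by
      obtain ⟨C, hC⟩ := aux_bound_s10 (G J) (H J) (hGs J) (hHs J) (hH0 J) sinf ‖z‖ J
      refine ⟨C, fun k x => ?_⟩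
      rw [hg J k, iteratedFDeriv_const_smul_apply'
        ((hprod J k).contDiffAt.of_le (by exact_mod_cast le_top)), norm_smul,
        Real.norm_of_nonneg (by have := hrpos k; positivity), mul_assoc, mul_comm C]
      have := hC (r k) (s k) (hrpos k) (hrle k) (hsc k) x
      gcongr) j ε hε
  obtain ⟨N₀, hN₀⟩ := key
  refine ⟨N₀, fun N hN x => ?_⟩
  have e : F - fN N = fun x => ∑' k, g k x - ∑ k ∈ Finset.range (N + 1), g k x := by
    funext x
    simp only [Pi.sub_apply, g]
    rw [hF, hfN, tsum_mul_left, Finset.mul_sum]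
  rw [e]
  exact hN₀ N hN x
end

section
/- If S satisfies the slice condition at x, then for every g ∈ G and every s ∈ S the stabilizer of y := g • s is conjugate to a subgroup of Stab(x): for every h ∈ Stab(g • s), one has g⁻¹ * h * g ∈ Stab(x). (This is property (5) of slices in Section 5 of the paper.) -/
open Pointwise

/-- Slice property (5): if `S` satisfies the slice condition at `x`, then for every `g ∈ G`
and `s ∈ S`, the stabilizer of `g • s` is conjugate (by `g`) to a subgroup of the
stabilizer of `x`. -/
theorem stmt_12 {G M : Type*} [Group G] [MulAction G M]
    (x : M) (S : Set M) (hxS : x ∈ S)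
    (hslice : ∀ g : G, (g • S) ∩ S ≠ ∅ → g ∈ MulAction.stabilizer G x) :
    ∀ g : G, ∀ s ∈ S, ∀ h ∈ MulAction.stabilizer G (g • s),
      g⁻¹ * h * g ∈ MulAction.stabilizer G x := by
  intro g s hs h hh
  apply hslice
  rw [← Set.nonempty_iff_ne_empty]
  have e : (g⁻¹ * h * g) • s = s := by
    rw [MulAction.mem_stabilizer_iff] at hh
    rw [mul_smul, mul_smul, hh, inv_smul_smul]
  exact ⟨s, ⟨s, hs, e⟩, hs⟩
end

section
/- Suppose in addition that M is a topological space, V is a type, χ : V → G is a map, and the set F := {χ(v) • s : v ∈ V, s ∈ S} is a neighborhood of x. If S satisfies the slice condition at x, then every point of the neighborhood F has stabilizer conjugate to a subgroup of Stab(x): for every y ∈ F there exists g ∈ G such that g⁻¹ * h * g ∈ Stab(x) for all h ∈ Stab(y). (This is the consequence of the slice properties (3)–(5) of Section 5 that is used to refute the existence of slices in Counter-examples 6 and 7: if in every neighborhood of x there are points whose stabilizer is not conjugate into Stab(x), then no slice at x exists.) -/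
open Pointwise

/-- If `S` satisfies the slice condition at `x` and `F = {χ v • s : v ∈ V, s ∈ S}` is a
neighborhood of `x`, then every point of `F` has stabilizer conjugate to a subgroup of
the stabilizer of `x`. -/
theorem stmt_13 {G M V : Type*} [Group G] [MulAction G M] [TopologicalSpace M]
    (x : M) (S : Set M) (hxS : x ∈ S)
    (χ : V → G)
    (hF : {y : M | ∃ (v : V) (s : M), s ∈ S ∧ y = χ v • s} ∈ nhds x)
    (hslice : ∀ g : G, (g • S) ∩ S ≠ ∅ → g ∈ MulAction.stabilizer G x) :
    ∀ y ∈ {y : M | ∃ (v : V) (s : M), s ∈ S ∧ y = χ v • s},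
      ∃ g : G, ∀ h ∈ MulAction.stabilizer G y,
        g⁻¹ * h * g ∈ MulAction.stabilizer G x := by
  rintro y ⟨v, s, hs, rfl⟩
  refine ⟨χ v, fun h hh => hslice _ ?_⟩
  rw [MulAction.mem_stabilizer_iff] at hh
  refine Set.Nonempty.ne_empty ⟨s, ?_, hs⟩
  refine Set.mem_smul_set.mpr ⟨s, hs, ?_⟩
  rw [mul_smul, mul_smul, hh, inv_smul_smul]
end

section
/- Let λ ∈ ℝ be irrational, let Y be a Hausdorff topological space, and let F : T × T → Y be continuous with F(↑t, ↑(c + λ*t)) = F(↑0, ↑c) for all t, c ∈ ℝ (i.e. F is constant along every leaf of slope λ). Then F is constant on T × T. -/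
/-- A continuous function on the torus which is constant along every leaf of an irrational
slope `λ` foliation is constant. -/
theorem stmt_15 (lam : ℝ) (hlam : Irrational lam)
    {Y : Type*} [TopologicalSpace Y] [T2Space Y]
    (F : AddCircle (1 : ℝ) × AddCircle (1 : ℝ) → Y) (hF : Continuous F)
    (hleaf : ∀ t c : ℝ,
      F ((t : AddCircle (1 : ℝ)), ((c + lam * t : ℝ) : AddCircle (1 : ℝ))) =
        F (((0 : ℝ) : AddCircle (1 : ℝ)), (c : AddCircle (1 : ℝ)))) :
    ∀ p q : AddCircle (1 : ℝ) × AddCircle (1 : ℝ), F p = F q := by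
  have hd : Dense (AddSubgroup.closure {lam, 1} : Set ℝ) := by
    rw [dense_addSubgroupClosure_pair_iff]
    simpa using hlam
  have hint : ∀ n : ℤ, (((n : ℝ)) : AddCircle (1 : ℝ)) = ((0 : ℝ) : AddCircle (1 : ℝ)) := by
    intro n
    have h : (((n : ℝ)) : AddCircle (1 : ℝ)) = 0 := by
      rw [AddCircle.coe_eq_zero_iff]
      exact ⟨n, by simp⟩
    rw [h]; rfl
  have hg : Continuous (fun c : ℝ => F (((0 : ℝ) : AddCircle (1 : ℝ)), (c : AddCircle (1 : ℝ)))) :=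
    hF.comp (continuous_const.prodMk (AddCircle.continuous_mk' 1))
  have key : (fun c : ℝ => F (((0 : ℝ) : AddCircle (1 : ℝ)), (c : AddCircle (1 : ℝ)))) =
      fun _ => F (((0 : ℝ) : AddCircle (1 : ℝ)), ((0 : ℝ) : AddCircle (1 : ℝ))) := by
    refine hg.ext_on hd continuous_const ?_
    intro x hx
    obtain ⟨m, n, rfl⟩ := AddSubgroup.mem_closure_pair.1 hx
    have h := hleaf (m : ℝ) n
    rw [hint, hint n] at h
    simp only
    rw [← h]
    congr 3
    simp [mul_comm, add_comm]
  have all : ∀ p, F p = F (((0 : ℝ) : AddCircle (1 : ℝ)), ((0 : ℝ) : AddCircle (1 : ℝ))) := by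
    rintro ⟨a, b⟩
    obtain ⟨t, rfl⟩ := QuotientAddGroup.mk_surjective a
    obtain ⟨s, rfl⟩ := QuotientAddGroup.mk_surjective b
    have h := hleaf t (s - lam * t)
    rw [sub_add_cancel] at h
    exact h.trans (congrFun key _)
  intro p q
  rw [all p, all q]
end

section
/- Let λ ∈ ℝ be irrational and let ψ : T × T → T be continuous such that for every c ∈ ℝ there exists c' ∈ ℝ with ψ(↑t, ↑(c + λ*t)) = ↑(c' + λ*t) for all t ∈ ℝ (i.e. the fiber-preserving map (x,y) ↦ (x, ψ(x,y)) maps each leaf of slope λ into a leaf of slope λ). Then there exists a ∈ T such that ψ(x, y) = y + a for all (x, y) ∈ T × T. (This makes precise the paper's claim in Counter-example 7 that the isotropy group of the flat connection whose horizontal foliation has irrational slope λ equals S¹, the group of fiber rotations.) -/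
/-- If a continuous fiber map `ψ` of the torus maps every leaf of irrational slope `λ`
into a leaf of slope `λ`, then `ψ` is a rotation in the fiber: `ψ (x, y) = y + a`. -/
theorem stmt_16 (lam : ℝ) (hlam : Irrational lam)
    (ψ : AddCircle (1 : ℝ) × AddCircle (1 : ℝ) → AddCircle (1 : ℝ))
    (hψ : Continuous ψ)
    (hleaf : ∀ c : ℝ, ∃ c' : ℝ, ∀ t : ℝ,
      ψ ((t : AddCircle (1 : ℝ)), ((c + lam * t : ℝ) : AddCircle (1 : ℝ))) =
        ((c' + lam * t : ℝ) : AddCircle (1 : ℝ))) :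
    ∃ a : AddCircle (1 : ℝ), ∀ x y : AddCircle (1 : ℝ), ψ (x, y) = y + a := by
  obtain ⟨a, ha⟩ := hleaf 0
  have hint : ∀ n : ℤ, ((n : ℝ) : AddCircle (1 : ℝ)) = 0 := by
    intro n
    rw [AddCircle.coe_eq_zero_iff]
    exact ⟨n, by simp⟩
  have hd : DenseRange (fun n : ℤ => n • (lam : AddCircle (1 : ℝ))) :=
    AddCircle.denseRange_zsmul_coe_iff.2 (by simpa using hlam)
  have hf : (fun y : AddCircle (1 : ℝ) => ψ (0, y)) = fun y => y + (a : AddCircle (1 : ℝ)) := by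
    refine hd.equalizer (by fun_prop) (by fun_prop) ?_
    funext n
    have h := ha n
    rw [hint n] at h
    have e : n • (lam : AddCircle (1 : ℝ)) = ((lam * n : ℝ) : AddCircle (1 : ℝ)) := by
      rw [← AddCircle.coe_zsmul, zsmul_eq_mul, mul_comm]
    simp only [Function.comp_apply]
    rw [e]
    rw [zero_add] at h
    rw [h, AddCircle.coe_add, add_comm]
  refine ⟨a, fun x y => ?_⟩
  obtain ⟨t, rfl⟩ := QuotientAddGroup.mk_surjective x
  obtain ⟨s, rfl⟩ := QuotientAddGroup.mk_surjective y
  obtain ⟨c', hc⟩ := hleaf (s - lam * t)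
  have h0 := hc 0
  have ht := hc t
  have h1 := congrFun hf ((s - lam * t : ℝ) : AddCircle (1 : ℝ))
  simp only [mul_zero, add_zero, AddCircle.coe_zero] at h0
  simp only [h0] at h1
  rw [sub_add_cancel, AddCircle.coe_add, h1, AddCircle.coe_sub] at ht
  refine ht.trans ?_
  change (s : AddCircle (1 : ℝ)) - _ + _ + _ = (s : AddCircle (1 : ℝ)) + _
  abel
end
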